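/- arXiv:2211.12066 — 2 statements merged into one kernel-verified Lean document; each statement's English description precedes it below -/
import Mathlib

section
/- Let N ≥ 3, q ∈ [1,∞], and β, γ ∈ ℝ with β > -N and γ ≠ -N. Then there exists a constant C₄ > 0 (depending only on N, q, β, γ) such that for every f ∈ L^q_{β,γ}: ∫_{B(0,R)} |f| dx ≤ C₄ ‖f‖_{L^q_{β,γ}} R^{β+N} for 0 < R ≤ 1, and ∫_{B(0,R)} |f| dx ≤ C₄ ‖f‖_{L^q_{β,γ}} R^{max{γ+N,0}} for R > 1. -/
/-!
Write `I(R) = ∫_{B(0,R)} |f|`, `W = ‖f‖_{L^q_{β,γ}}`, `s = γ + N`. Hölder's inequality on a single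
annulus, together with `|A(0,R)| ≤ |B(0,1)| R^N`, gives `∫_{A(0,R)} |f| ≤ V R^N ω_{β,γ}(R) W`
(`annulus_bound`).

For `R ≤ 1` the punctured ball is covered by the annuli `A(0, R 2^{-k})`, and since `β + N > 0` the
bounds `V (R 2^{-k})^{β+N} W` form a convergent geometric series (`small_ball_bound`).

For `R > 1` one has `I(R) ≤ I(R/2) + V R^s W`. As `s ≠ 0`, the number `T = V / (1 - 2^{-s})` is
well defined (negative when `s < 0`), and `g(R) = K + T R^s` solves the recursion
`g(R) = g(R/2) + V R^s` exactly. For `K` large enough `g` dominates the bound known on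
`1/2 < R ≤ 1`, so repeated halving gives `I(R) ≤ g(R) W` (`large_ball_bound`), and
`g(R) ≤ (K + |T|) R^{max(s,0)}`.
-/

open MeasureTheory Metric ENNReal Filter

noncomputable section

abbrev Euc (N : ℕ) : Type := EuclideanSpace ℝ (Fin N)

/-- The fundamental solution `Γ(x) = |x|^{2-N} / (N (N-2) ω_N)` of `-Δ` on `ℝ^N`. -/
def fundSol (N : ℕ) (x : Euc N) : ℝ :=
  ‖x‖ ^ (2 - (N : ℝ)) / ((N : ℝ) * ((N : ℝ) - 2) * (volume (ball (0 : Euc N) 1)).toReal)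

/-- The annulus `A(0,R) = B(0,R) \ B(0,R/2)`. -/
def annulusA (N : ℕ) (R : ℝ) : Set (Euc N) := ball (0 : Euc N) R \ ball 0 (R / 2)

/-- The weight `ω_{β,γ}(R)`. -/
def omegaWt (β γ R : ℝ) : ℝ := if R ≤ 1 then R ^ β else R ^ γ

/-- The weighted norm `‖f‖_{L^q_{β,γ}} = sup_{R>0} R^{-N/q} ω_{β,γ}(R)⁻¹ ‖f‖_{L^q(A(0,R))}`. -/
def wNorm (N : ℕ) (q : ℝ≥0∞) (β γ : ℝ) (f : Euc N → ℝ) : ℝ≥0∞ :=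
  ⨆ R : {R : ℝ // 0 < R},
    ENNReal.ofReal (((R : ℝ) ^ (-((N : ℝ) / q.toReal))) / omegaWt β γ (R : ℝ)) *
      eLpNorm f q (volume.restrict (annulusA N (R : ℝ)))

/-- Membership in the weighted space `L^q_{β,γ}`. -/
def MemW (N : ℕ) (q : ℝ≥0∞) (β γ : ℝ) (f : Euc N → ℝ) : Prop :=
  AEStronglyMeasurable f volume ∧ wNorm N q β γ f < ⊤

/-- `(Γ * f)(x) = ∫ Γ(x-y) f(y) dy` as an `ℝ≥0∞`-valued integral (for `f ≥ 0`). -/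
def GammaConvFn (N : ℕ) (f : Euc N → ℝ) (x : Euc N) : ℝ≥0∞ :=
  ∫⁻ y, ENNReal.ofReal (fundSol N (x - y)) * ENNReal.ofReal (f y)

/-- `(Γ * μ)(x) = ∫ Γ(x-y) dμ(y)`. -/
def GammaConvMeas (N : ℕ) (μ : Measure (Euc N)) (x : Euc N) : ℝ≥0∞ :=
  ∫⁻ y, ENNReal.ofReal (fundSol N (x - y)) ∂μ

/-- A solution of problem `(P_κ)`. -/
def IsSolution (N : ℕ) (α : Euc N → ℝ) (p : ℝ) (μ : Measure (Euc N)) (κ : ℝ)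
    (u : Euc N → ℝ) : Prop :=
  Measurable u ∧ (∀ᵐ x, 0 < u x) ∧
    ∀ᵐ x, ENNReal.ofReal (u x)
      = GammaConvFn N (fun y => α y * u y ^ p) x + ENNReal.ofReal κ * GammaConvMeas N μ x

/-- A minimal solution of problem `(P_κ)`. -/
def IsMinSolution (N : ℕ) (α : Euc N → ℝ) (p : ℝ) (μ : Measure (Euc N)) (κ : ℝ)
    (u : Euc N → ℝ) : Prop :=
  IsSolution N α p μ κ u ∧ ∀ v, IsSolution N α p μ κ v → ∀ᵐ x, u x ≤ v x

lemma omegaWt_pos (β γ R : ℝ) (hR : 0 < R) : 0 < omegaWt β γ R := by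
  unfold omegaWt; split_ifs <;> positivity

/-- Hölder's inequality on one annulus. For `q = ∞` the convention `1 / (∞).toReal = 0` gives the
correct exponent. -/
lemma annulus_bound (N : ℕ) (hN : 3 ≤ N) (q : ℝ≥0∞) (β γ : ℝ) (hq : 1 ≤ q) :
    ∃ V : ℝ, 0 < V ∧ ∀ f : Euc N → ℝ, AEStronglyMeasurable f volume → ∀ R : ℝ, 0 < R →
      ∫⁻ x in annulusA N R, ‖f x‖ₑ
        ≤ ENNReal.ofReal (V * (R ^ (N : ℝ) * omegaWt β γ R)) * wNorm N q β γ f := by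
  have : NeZero N := ⟨by omega⟩
  set v : ℝ := (volume (ball (0 : Euc N) 1)).toReal with hv
  have hvfin : volume (ball (0 : Euc N) 1) ≠ ⊤ := measure_ball_lt_top.ne
  have hvpos : 0 < v := ENNReal.toReal_pos (measure_ball_pos _ _ one_pos).ne' hvfin
  set θ : ℝ := 1 - 1 / q.toReal with hθ
  have hθ0 : 0 ≤ θ := by
    rcases eq_or_ne q ⊤ with h | h
    · simp [hθ, h]
    · have h1 : 1 ≤ q.toReal := by
        simpa using ENNReal.toReal_mono h hq
      have : 1 / q.toReal ≤ 1 := by rw [div_le_one (by linarith)]; exact h1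
      linarith
  refine ⟨v ^ θ, by positivity, fun f hf R hR => ?_⟩
  have hω := omegaWt_pos β γ R hR
  set c : ℝ := R ^ (-((N : ℝ) / q.toReal)) / omegaWt β γ R with hc
  have hcpos : 0 < c := by positivity
  set E := eLpNorm f q (volume.restrict (annulusA N R)) with hE
  have h1 : ENNReal.ofReal c * E ≤ wNorm N q β γ f :=
    le_iSup (fun R : {R : ℝ // 0 < R} =>
      ENNReal.ofReal (((R : ℝ) ^ (-((N : ℝ) / q.toReal))) / omegaWt β γ (R : ℝ)) *
      eLpNorm f q (volume.restrict (annulusA N (R : ℝ)))) ⟨R, hR⟩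
  have h2 : E ≤ ENNReal.ofReal c⁻¹ * wNorm N q β γ f := by
    calc E = ENNReal.ofReal c⁻¹ * (ENNReal.ofReal c * E) := by
          rw [← mul_assoc, ← ENNReal.ofReal_mul (by positivity), inv_mul_cancel₀ hcpos.ne']
          simp
      _ ≤ _ := by gcongr
  have h3 := eLpNorm_le_eLpNorm_mul_rpow_measure_univ (μ := volume.restrict (annulusA N R))
    hq hf.restrict
  have h4 : (volume.restrict (annulusA N R)) Set.univ ≤ ENNReal.ofReal (R ^ (N : ℝ) * v) := by
    rw [Measure.restrict_apply_univ]
    calc volume (annulusA N R) ≤ volume (ball (0 : Euc N) R) := measure_mono Set.sdiff_subset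
      _ = _ := by
        rw [Measure.addHaar_ball _ _ hR.le, ENNReal.ofReal_mul (by positivity), hv,
          ENNReal.ofReal_toReal hvfin]
        simp [Real.rpow_natCast]
  rw [eLpNorm_one_eq_lintegral_enorm] at h3
  have h5 : (volume.restrict (annulusA N R)) Set.univ ^ θ
      ≤ ENNReal.ofReal ((R ^ (N : ℝ) * v) ^ θ) := by
    rw [← ENNReal.ofReal_rpow_of_nonneg (by positivity) hθ0]
    exact ENNReal.rpow_le_rpow h4 hθ0
  calc ∫⁻ x in annulusA N R, ‖f x‖ₑ
      ≤ E * (volume.restrict (annulusA N R)) Set.univ ^ θ := by simpa [hθ] using h3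
    _ ≤ (ENNReal.ofReal c⁻¹ * wNorm N q β γ f) * ENNReal.ofReal ((R ^ (N : ℝ) * v) ^ θ) := by
        gcongr
    _ = ENNReal.ofReal (c⁻¹ * (R ^ (N : ℝ) * v) ^ θ) * wNorm N q β γ f := by
        rw [ENNReal.ofReal_mul (by positivity)]; ring
    _ = _ := by
        congr 2
        -- the powers of `R` combine as `N/q + N (1 - 1/q) = N`
        have h6 : R ^ ((N : ℝ) / q.toReal) * R ^ ((N : ℝ) * θ) = R ^ (N : ℝ) := by
          rw [← Real.rpow_add hR]; congr 1; rw [hθ]; ring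
        rw [Real.mul_rpow (by positivity) hvpos.le, ← Real.rpow_mul hR.le, hc, inv_div,
          Real.rpow_neg hR.le, div_inv_eq_mul, ← h6]
        ring

lemma ball_subset_iUnion_annulusA (N : ℕ) (R : ℝ) :
    ball (0 : Euc N) R ⊆ {0} ∪ ⋃ k : ℕ, annulusA N (R * (1 / 2) ^ k) := by
  intro x hx
  by_contra hcon
  simp only [Set.mem_union, Set.mem_singleton_iff, Set.mem_iUnion, not_or, not_exists] at hcon
  obtain ⟨hx0, hk⟩ := hcon
  have hall : ∀ k : ℕ, ‖x‖ < R * (1 / 2) ^ k := by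
    intro k
    induction k with
    | zero => simpa using hx
    | succ k ih =>
      by_contra! h
      refine hk k ⟨by simpa using ih, ?_⟩
      simp only [mem_ball_zero_iff, not_lt]
      calc _ = R * (1 / 2) ^ (k + 1) := by ring
        _ ≤ _ := h
  have hlim : Tendsto (fun k : ℕ => R * (1 / 2 : ℝ) ^ k) atTop (nhds (R * 0)) :=
    (_root_.tendsto_pow_atTop_nhds_zero_of_lt_one (by norm_num) (by norm_num)).const_mul R
  have := ge_of_tendsto' hlim (fun k => (hall k).le)
  rw [mul_zero] at this
  exact hx0 (norm_le_zero_iff.mp this)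

/-- Annulus bounds sum to a bound on balls of radius at most `1`: a geometric series of ratio
`2^{-(β+N)} < 1`. -/
lemma small_ball_bound (N : ℕ) (hN : 3 ≤ N) (β γ V : ℝ) (hV : 0 < V) (hβ : -(N : ℝ) < β) :
    ∃ C : ℝ, 0 < C ∧ ∀ (f : Euc N → ℝ) (W : ℝ≥0∞),
      (∀ R : ℝ, 0 < R → ∫⁻ x in annulusA N R, ‖f x‖ₑ
        ≤ ENNReal.ofReal (V * (R ^ (N : ℝ) * omegaWt β γ R)) * W) →
      ∀ R : ℝ, 0 < R → R ≤ 1 →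
        ∫⁻ x in ball (0 : Euc N) R, ‖f x‖ₑ ≤ ENNReal.ofReal (C * R ^ (β + (N : ℝ))) * W := by
  have : NeZero N := ⟨by omega⟩
  set a := β + (N : ℝ) with ha
  have ha0 : 0 < a := by linarith
  set r : ℝ := (1 / 2 : ℝ) ^ a with hr
  have hr0 : 0 < r := by positivity
  have hr1 : r < 1 := Real.rpow_lt_one (by norm_num) (by norm_num) ha0
  have hr2 : 0 < 1 - r := by linarith
  refine ⟨V * (1 - r)⁻¹, by positivity, fun f W hA R hR hR1 => ?_⟩
  have hterm : ∀ k : ℕ, ∫⁻ x in annulusA N (R * (1 / 2) ^ k), ‖f x‖ₑ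
      ≤ ENNReal.ofReal (V * R ^ a * r ^ k) * W := by
    intro k
    have hp : 0 < R * (1 / 2 : ℝ) ^ k := by positivity
    have hp1 : R * (1 / 2 : ℝ) ^ k ≤ 1 :=
      mul_le_one₀ hR1 (by positivity) (pow_le_one₀ (by norm_num) (by norm_num))
    refine (hA _ hp).trans_eq ?_
    congr 2
    rw [omegaWt, if_pos hp1, ← Real.rpow_add hp, add_comm, ← ha,
      Real.mul_rpow hR.le (by positivity), hr, ← Real.rpow_natCast, ← Real.rpow_natCast,
      ← Real.rpow_mul (by norm_num), ← Real.rpow_mul (by norm_num), mul_comm (k : ℝ) a]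
    ring
  have hnull : ∫⁻ x in ({0} : Set (Euc N)), ‖f x‖ₑ = 0 :=
    setLIntegral_measure_zero _ _ (by simp)
  calc ∫⁻ x in ball (0 : Euc N) R, ‖f x‖ₑ
      ≤ ∫⁻ x in {0} ∪ ⋃ k : ℕ, annulusA N (R * (1 / 2) ^ k), ‖f x‖ₑ :=
        lintegral_mono_set (ball_subset_iUnion_annulusA N R)
    _ ≤ (∫⁻ x in ({0} : Set (Euc N)), ‖f x‖ₑ)
        + ∫⁻ x in ⋃ k : ℕ, annulusA N (R * (1 / 2) ^ k), ‖f x‖ₑ := lintegral_union_le _ _ _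
    _ ≤ ∑' k : ℕ, ∫⁻ x in annulusA N (R * (1 / 2) ^ k), ‖f x‖ₑ := by
        rw [hnull, zero_add]; exact lintegral_iUnion_le _ _
    _ ≤ ∑' k : ℕ, ENNReal.ofReal (V * R ^ a * r ^ k) * W := ENNReal.tsum_le_tsum hterm
    _ = ENNReal.ofReal (V * (1 - r)⁻¹ * R ^ a) * W := by
        rw [ENNReal.tsum_mul_right, ← ENNReal.ofReal_tsum_of_nonneg (fun k => by positivity)
          ((summable_geometric_of_lt_one hr0.le hr1).mul_left _), tsum_mul_left,
          tsum_geometric_of_lt_one hr0.le hr1]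
        congr 2; ring

/-- Extends the bound from radii at most `1` to all larger radii by repeated halving, comparing with
the exact solution `K + T R^s`, `s = γ + N`, of the recursion `g(R) = g(R/2) + V R^s`. -/
lemma large_ball_bound (N : ℕ) (β γ V C : ℝ) (hV : 0 < V) (hC : 0 < C) (hβ : -(N : ℝ) < β)
    (hγ : γ ≠ -(N : ℝ)) :
    ∃ D : ℝ, 0 < D ∧ ∀ (f : Euc N → ℝ) (W : ℝ≥0∞),
      (∀ R : ℝ, 0 < R → ∫⁻ x in annulusA N R, ‖f x‖ₑ
        ≤ ENNReal.ofReal (V * (R ^ (N : ℝ) * omegaWt β γ R)) * W) →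
      (∀ R : ℝ, 0 < R → R ≤ 1 →
        ∫⁻ x in ball (0 : Euc N) R, ‖f x‖ₑ ≤ ENNReal.ofReal (C * R ^ (β + (N : ℝ))) * W) →
      ∀ R : ℝ, 1 < R →
        ∫⁻ x in ball (0 : Euc N) R, ‖f x‖ₑ
          ≤ ENNReal.ofReal (D * R ^ (max (γ + (N : ℝ)) 0)) * W := by
  set s := γ + (N : ℝ) with hs
  have hs0 : s ≠ 0 := fun h => hγ (by linarith)
  set t : ℝ := (1 / 2 : ℝ) ^ s with ht
  have ht0 : 0 < t := by positivity
  have ht1 : 1 - t ≠ 0 := by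
    rcases lt_or_gt_of_ne hs0 with h | h
    · have := Real.one_lt_rpow_of_pos_of_lt_one_of_neg (x := 1 / 2) (by norm_num) (by norm_num) h
      linarith
    · have := Real.rpow_lt_one (x := 1 / 2) (by norm_num) (by norm_num) h
      linarith
  set T : ℝ := V / (1 - t) with hT
  have hTV : T * t + V = T := by rw [hT]; field_simp; ring
  -- the term `|T| * t` absorbs `T * R ^ s` on `R > 1 / 2` when `s < 0`, in which case `T < 0`
  set K : ℝ := C + |T| * t with hK
  have hKpos : 0 < K := by positivity
  have hbase : ∀ R : ℝ, 1 / 2 < R → C ≤ K + T * R ^ s := by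
    intro R hR
    have hR0 : 0 < R := by linarith
    have hRs : 0 < R ^ s := by positivity
    rcases lt_or_gt_of_ne hs0 with h | h
    · have h1 : R ^ s ≤ t := Real.rpow_le_rpow_of_nonpos (by norm_num) hR.le h.le
      have h2 : -|T| * R ^ s ≤ T * R ^ s := by gcongr; exact neg_abs_le T
      have h3 : |T| * R ^ s ≤ |T| * t := by gcongr
      linarith
    · have h1 : t < 1 := Real.rpow_lt_one (by norm_num) (by norm_num) h
      have h2 : 0 < T := div_pos hV (by linarith)
      have : 0 ≤ |T| * t := by positivity
      have : 0 < T * R ^ s := by positivity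
      linarith
  refine ⟨K + |T|, by positivity, fun f W hA hsmall R hR => ?_⟩
  -- induction on the number of halvings needed to bring the radius into `(1/2, 1]`
  have key : ∀ n : ℕ, ∀ R : ℝ, 1 / 2 < R → R ≤ 2 ^ n →
      ∫⁻ x in ball (0 : Euc N) R, ‖f x‖ₑ ≤ ENNReal.ofReal (K + T * R ^ s) * W := by
    have hle1 : ∀ R : ℝ, 1 / 2 < R → R ≤ 1 →
        ∫⁻ x in ball (0 : Euc N) R, ‖f x‖ₑ ≤ ENNReal.ofReal (K + T * R ^ s) * W := by
      intro R hR hR1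
      refine (hsmall R (by linarith) hR1).trans ?_
      gcongr
      refine le_trans ?_ (hbase R hR)
      have : R ^ (β + (N : ℝ)) ≤ 1 := Real.rpow_le_one (by linarith) hR1 (by linarith)
      nlinarith
    intro n
    induction n with
    | zero => intro R hR hR1; exact hle1 R hR (by simpa using hR1)
    | succ n ih =>
      intro R hR hRn
      rcases le_or_gt R 1 with h1 | h1
      · exact hle1 R hR h1
      have hR0 : 0 < R := by linarith
      have hhalf := ih (R / 2) (by linarith) (by rw [pow_succ] at hRn; linarith)
      have hann := hA R hR0
      rw [omegaWt, if_neg (not_le.mpr h1), ← Real.rpow_add hR0, add_comm, ← hs] at hann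
      have hsub : ball (0 : Euc N) R ⊆ ball 0 (R / 2) ∪ annulusA N R := by
        intro x hx
        by_cases h : x ∈ ball (0 : Euc N) (R / 2)
        · exact Or.inl h
        · exact Or.inr ⟨hx, h⟩
      have hRt : (R / 2) ^ s = R ^ s * t := by
        rw [ht, ← Real.mul_rpow hR0.le (by norm_num)]; congr 1; ring
      calc ∫⁻ x in ball (0 : Euc N) R, ‖f x‖ₑ
          ≤ ∫⁻ x in ball (0 : Euc N) (R / 2) ∪ annulusA N R, ‖f x‖ₑ := lintegral_mono_set hsub
        _ ≤ (∫⁻ x in ball (0 : Euc N) (R / 2), ‖f x‖ₑ) + ∫⁻ x in annulusA N R, ‖f x‖ₑ :=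
            lintegral_union_le _ _ _
        _ ≤ ENNReal.ofReal (K + T * (R / 2) ^ s) * W + ENNReal.ofReal (V * R ^ s) * W :=
            add_le_add hhalf hann
        _ = ENNReal.ofReal (K + T * R ^ s) * W := by
            rw [← add_mul, ← ENNReal.ofReal_add
              (hC.le.trans (hbase (R / 2) (by linarith))) (by positivity), hRt]
            congr 2
            linear_combination R ^ s * hTV
  obtain ⟨n, hn⟩ := pow_unbounded_of_one_lt R (one_lt_two)
  refine (key n R (by linarith) hn.le).trans ?_
  gcongr
  have h1 : R ^ s ≤ R ^ (max s 0) := Real.rpow_le_rpow_of_exponent_le hR.le (le_max_left _ _)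
  have h2 : 1 ≤ R ^ (max s 0) := Real.one_le_rpow hR.le (le_max_right _ _)
  have hRs : 0 < R ^ s := by positivity
  calc K + T * R ^ s ≤ K * 1 + |T| * R ^ s := by
        rw [mul_one]; gcongr; exact le_abs_self T
    _ ≤ K * R ^ (max s 0) + |T| * R ^ (max s 0) := by gcongr
    _ = _ := by ring

/-- **Lemma 2.1 (4)**: if `β > -N` and `γ ≠ -N`, then for `f ∈ L^q_{β,γ}`,
`∫_{B(0,R)} |f| ≤ C ‖f‖_{L^q_{β,γ}} R^{β+N}` for `R ≤ 1` and
`∫_{B(0,R)} |f| ≤ C ‖f‖_{L^q_{β,γ}} R^{max{γ+N,0}}` for `R > 1`. -/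
theorem wSpace_ball_integral
    (N : ℕ) (hN : 3 ≤ N) (q : ℝ≥0∞) (β γ : ℝ) (hq : 1 ≤ q)
    (hβ : -(N : ℝ) < β) (hγ : γ ≠ -(N : ℝ)) :
    ∃ C : ℝ, 0 < C ∧ ∀ f : Euc N → ℝ, MemW N q β γ f →
      (∀ R : ℝ, 0 < R → R ≤ 1 →
        ∫⁻ x in ball (0 : Euc N) R, ENNReal.ofReal |f x|
          ≤ ENNReal.ofReal (C * R ^ (β + (N : ℝ))) * wNorm N q β γ f) ∧
      (∀ R : ℝ, 1 < R →
        ∫⁻ x in ball (0 : Euc N) R, ENNReal.ofReal |f x|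
          ≤ ENNReal.ofReal (C * R ^ (max (γ + (N : ℝ)) 0)) * wNorm N q β γ f) := by
  obtain ⟨V, hV, hann⟩ := annulus_bound N hN q β γ hq
  obtain ⟨C, hC, hsmall⟩ := small_ball_bound N hN β γ V hV hβ
  obtain ⟨D, hD, hlarge⟩ := large_ball_bound N β γ V C hV hC hβ hγ
  refine ⟨max C D, lt_max_of_lt_left hC, fun f hf => ?_⟩
  have hA := hann f hf.1
  have hS := hsmall f _ hA
  have hL := hlarge f _ hA hS
  simp only [← Real.enorm_eq_ofReal_abs]
  refine ⟨fun R hR hR1 => (hS R hR hR1).trans ?_, fun R hR => (hL R hR).trans ?_⟩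
  · gcongr
    exact le_max_left _ _
  · gcongr
    exact le_max_right _ _
end
end

section
/- Under the standing assumptions (H), let κ > 0 and assume there exists a supersolution v of problem (P_κ). Then problem (P_κ) possesses a minimal solution u^κ, and u^κ(x) = lim_{j→∞} U^κ_j(x) ≤ v(x) for a.e. x ∈ ℝ^N, where U^κ_j are the approximate solutions. Furthermore, there exists a constant C > 0, independent of κ, such that u^κ(x) ≥ C κ (1+|x|)^{-N+2} for a.e. x ∈ ℝ^N. -/
/-!
The approximations `U_j` increase in `j`, because the map `U ↦ Γ * (α U^p) + κ Γ * μ` is monotone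
on `ℝ≥0∞`-valued functions, and by induction every `U_j` lies below any supersolution `v`
(`approxU_le_of_super`).  By monotone convergence `U = sup_j U_j` satisfies the integral equation
at every point (`iSup_approxU_eq`), and `U ≤ v` makes it finite almost everywhere, so the
function `x ↦ (U x).toReal` is a solution.  Every solution is a supersolution, so this solution is
minimal.

The pointwise lower bound, which also gives positivity, comes from `U ≥ U_0 = κ Γ * μ`: some ball
`B(0, n)` with `n ≥ 1` carries positive mass of `μ`, and `|x - y| ≤ n (1 + |x|)` for `y` in it
(`exists_lower_bound`).
-/

open MeasureTheory Metric ENNReal Filter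

noncomputable section

/-- The approximate solutions `U^κ_j` (with `U^κ_{-1} ≡ 0`, so that `U^κ_0 = κ Γ*μ`). -/
def approxU (N : ℕ) (α : Euc N → ℝ) (p : ℝ) (μ : Measure (Euc N)) (κ : ℝ) :
    ℕ → Euc N → ℝ≥0∞
  | 0 => fun x => ENNReal.ofReal κ * GammaConvMeas N μ x
  | j + 1 => fun x =>
      (∫⁻ y, ENNReal.ofReal (fundSol N (x - y)) * ENNReal.ofReal (α y) *
          approxU N α p μ κ j y ^ p) +
        ENNReal.ofReal κ * GammaConvMeas N μ x

/-- A supersolution of problem `(P_κ)`. -/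
def IsSuperSolution (N : ℕ) (α : Euc N → ℝ) (p : ℝ) (μ : Measure (Euc N)) (κ : ℝ)
    (u : Euc N → ℝ) : Prop :=
  Measurable u ∧ (∀ᵐ x, 0 < u x) ∧
    ∀ᵐ x, GammaConvFn N (fun y => α y * u y ^ p) x + ENNReal.ofReal κ * GammaConvMeas N μ x
      ≤ ENNReal.ofReal (u x)

lemma measurable_fundSol (N : ℕ) : Measurable (fundSol N) := by
  unfold fundSol
  fun_prop

lemma measurable_weight {N : ℕ} {α : Euc N → ℝ} (hα : ContinuousOn α {(0 : Euc N)}ᶜ) :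
    Measurable α :=
  measurable_of_continuousOn_compl_singleton 0 hα

lemma measurable_GammaConvMeas (N : ℕ) (μ : Measure (Euc N)) [SFinite μ] :
    Measurable (GammaConvMeas N μ) := by
  unfold GammaConvMeas
  have h : Measurable (Function.uncurry fun x y : Euc N => ENNReal.ofReal (fundSol N (x - y))) :=
    ((measurable_fundSol N).comp (measurable_fst.sub measurable_snd)).ennreal_ofReal
  exact h.lintegral_prod_right'

lemma measurable_approxU {N : ℕ} {α : Euc N → ℝ} (hα : Measurable α) (p : ℝ)
    (μ : Measure (Euc N)) [SFinite μ] (κ : ℝ) (j : ℕ) : Measurable (approxU N α p μ κ j) := by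
  induction j with
  | zero => exact (measurable_GammaConvMeas N μ).const_mul _
  | succ j ih =>
    refine Measurable.add ?_ ((measurable_GammaConvMeas N μ).const_mul _)
    have h : Measurable (Function.uncurry fun x y : Euc N =>
        ENNReal.ofReal (fundSol N (x - y)) * ENNReal.ofReal (α y) *
          approxU N α p μ κ j y ^ p) := by
      have h1 : Measurable fun z : Euc N × Euc N => ENNReal.ofReal (fundSol N (z.1 - z.2)) :=
        ((measurable_fundSol N).comp (measurable_fst.sub measurable_snd)).ennreal_ofReal
      exact (h1.mul (hα.comp measurable_snd).ennreal_ofReal).mul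
        ((ih.comp measurable_snd).pow_const p)
    exact h.lintegral_prod_right'

lemma approxU_mono (N : ℕ) (α : Euc N → ℝ) {p : ℝ} (hp : 0 ≤ p) (μ : Measure (Euc N)) (κ : ℝ) :
    Monotone (approxU N α p μ κ) := by
  refine monotone_nat_of_le_succ fun j => ?_
  induction j with
  | zero => exact fun x => le_add_self
  | succ j ih =>
    intro x
    refine add_le_add_left (lintegral_mono fun y => ?_) _
    exact mul_le_mul_right (ENNReal.rpow_le_rpow (ih y) hp) _

/-- The nonlinear potential of a real function that is positive a.e. agrees with the
`ℝ≥0∞`-valued integral occurring in `approxU`. -/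
lemma GammaConvFn_eq {N : ℕ} {α v : Euc N → ℝ} {p : ℝ} (hv : ∀ᵐ x, 0 < v x) (x : Euc N) :
    GammaConvFn N (fun y => α y * v y ^ p) x =
      ∫⁻ y, ENNReal.ofReal (fundSol N (x - y)) * ENNReal.ofReal (α y) *
        ENNReal.ofReal (v y) ^ p := by
  refine lintegral_congr_ae ?_
  filter_upwards [hv] with y hy
  rw [ENNReal.ofReal_mul' (Real.rpow_nonneg hy.le p), ENNReal.ofReal_rpow_of_pos hy, mul_assoc]

lemma approxU_le_of_super {N : ℕ} {α v : Euc N → ℝ} {p : ℝ} (hp : 0 ≤ p) {μ : Measure (Euc N)}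
    {κ : ℝ} (hv : IsSuperSolution N α p μ κ v) (j : ℕ) :
    ∀ᵐ x, approxU N α p μ κ j x ≤ ENNReal.ofReal (v x) := by
  obtain ⟨-, hpos, hsup⟩ := hv
  induction j with
  | zero =>
    filter_upwards [hsup] with x hx
    exact le_add_self.trans hx
  | succ j ih =>
    filter_upwards [hsup] with x hx
    refine le_trans (add_le_add_left ?_ _) hx
    rw [GammaConvFn_eq hpos]
    refine lintegral_mono_ae ?_
    filter_upwards [ih] with y hy
    exact mul_le_mul_right (ENNReal.rpow_le_rpow hy hp) _

lemma iSup_approxU_le_of_super {N : ℕ} {α v : Euc N → ℝ} {p : ℝ} (hp : 0 ≤ p)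
    {μ : Measure (Euc N)} {κ : ℝ} (hv : IsSuperSolution N α p μ κ v) :
    ∀ᵐ x, ⨆ j, approxU N α p μ κ j x ≤ ENNReal.ofReal (v x) := by
  filter_upwards [ae_all_iff.2 (approxU_le_of_super hp hv)] with x hx
  exact iSup_le hx

lemma IsSolution.isSuperSolution {N : ℕ} {α u : Euc N → ℝ} {p : ℝ} {μ : Measure (Euc N)} {κ : ℝ}
    (hu : IsSolution N α p μ κ u) : IsSuperSolution N α p μ κ u :=
  ⟨hu.1, hu.2.1, hu.2.2.mono fun _ hx => hx.ge⟩

/-- The supremum of the approximate solutions satisfies the integral equation at every point,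
as an identity in `ℝ≥0∞`. -/
lemma iSup_approxU_eq {N : ℕ} {α : Euc N → ℝ} (hα : Measurable α) {p : ℝ} (hp : 0 < p)
    (μ : Measure (Euc N)) [SFinite μ] (κ : ℝ) (x : Euc N) :
    ⨆ j, approxU N α p μ κ j x =
      (∫⁻ y, ENNReal.ofReal (fundSol N (x - y)) * ENNReal.ofReal (α y) *
        (⨆ j, approxU N α p μ κ j y) ^ p) + ENNReal.ofReal κ * GammaConvMeas N μ x := by
  have hmono := approxU_mono N α hp.le μ κ
  have hshift : ⨆ j, approxU N α p μ κ j x = ⨆ j, approxU N α p μ κ (j + 1) x :=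
    (Monotone.iSup_nat_add (fun i j hij => hmono hij x) 1).symm
  have hΓ : Measurable fun y => ENNReal.ofReal (fundSol N (x - y)) :=
    ((measurable_fundSol N).comp (measurable_const.sub measurable_id)).ennreal_ofReal
  have hint : ∀ y, ENNReal.ofReal (fundSol N (x - y)) * ENNReal.ofReal (α y) *
        (⨆ j, approxU N α p μ κ j y) ^ p =
      ⨆ j, ENNReal.ofReal (fundSol N (x - y)) * ENNReal.ofReal (α y) *
        approxU N α p μ κ j y ^ p := by
    intro y
    have h := (ENNReal.orderIsoRpow p hp).map_iSup fun j => approxU N α p μ κ j y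
    simp only [ENNReal.orderIsoRpow_apply] at h
    rw [h, ENNReal.mul_iSup]
  rw [hshift]
  simp_rw [hint]
  rw [lintegral_iSup, ENNReal.iSup_add]
  · rfl
  · intro j
    exact (hΓ.mul hα.ennreal_ofReal).mul ((measurable_approxU hα p μ κ j).pow_const p)
  · intro i j hij y
    exact mul_le_mul_right (ENNReal.rpow_le_rpow (hmono hij y) hp.le) _

/-- The potential of a nontrivial measure is bounded below by a multiple of `(1 + |x|)^(2-N)`;
the constant depends only on the mass of one ball, and so serves every `κ` at once. -/
lemma exists_lower_bound {N : ℕ} (hN : 3 ≤ N) (μ : Measure (Euc N)) [IsLocallyFiniteMeasure μ]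
    (hμ : μ ≠ 0) :
    ∃ C : ℝ, 0 < C ∧ ∀ᵐ x,
      ENNReal.ofReal (C * (1 + ‖x‖) ^ (-(N : ℝ) + 2)) ≤ GammaConvMeas N μ x := by
  have hN' : (3 : ℝ) ≤ N := by exact_mod_cast hN
  have : Nonempty (Fin N) := ⟨⟨0, by omega⟩⟩
  obtain ⟨n, hn⟩ : ∃ n : ℕ, 0 < μ (ball (0 : Euc N) n) := by
    by_contra! h
    apply hμ
    rw [← Measure.measure_univ_eq_zero, ← iUnion_ball_nat (0 : Euc N)]
    exact measure_iUnion_null fun n => nonpos_iff_eq_zero.1 (h n)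
  have hn1 : (1 : ℝ) ≤ n := by
    rcases Nat.eq_zero_or_pos n with rfl | h
    · simp at hn
    · exact_mod_cast h
  have hfin : μ (ball (0 : Euc N) n) ≠ ⊤ := measure_ball_lt_top.ne
  have hω : 0 < (volume (ball (0 : Euc N) 1)).toReal :=
    ENNReal.toReal_pos (measure_ball_pos _ _ one_pos).ne' measure_ball_lt_top.ne
  set D : ℝ := (N : ℝ) * ((N : ℝ) - 2) * (volume (ball (0 : Euc N) 1)).toReal with hD
  have hDpos : 0 < D := mul_pos (mul_pos (by linarith) (by linarith)) hω
  have hm : 0 < (μ (ball (0 : Euc N) n)).toReal := ENNReal.toReal_pos hn.ne' hfin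
  have hnpow : 0 < (n : ℝ) ^ (2 - (N : ℝ)) := Real.rpow_pos_of_pos (by linarith) _
  refine ⟨(n : ℝ) ^ (2 - (N : ℝ)) / D * (μ (ball (0 : Euc N) n)).toReal, by positivity, ?_⟩
  -- `fundSol` takes the value `0` at the origin, so the atoms of `μ` have to be avoided;
  -- they form a countable set, which is Lebesgue null.
  have hatoms : ∀ᵐ x : Euc N, μ {x} = 0 := by
    have hc : {x : Euc N | 0 < μ {x}}.Countable := by
      simpa using Measure.countable_meas_level_set_pos (μ := μ) (measurable_id (α := Euc N))
    filter_upwards [measure_eq_zero_iff_ae_notMem.1 (hc.measure_zero volume)] with x hx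
    exact nonpos_iff_eq_zero.1 (not_lt.1 hx)
  filter_upwards [hatoms] with x hx
  have hx1 : 0 < 1 + ‖x‖ := by positivity
  have hne : ∀ᵐ y ∂(μ.restrict (ball 0 n)), y ≠ x :=
    ae_restrict_of_ae (measure_eq_zero_iff_ae_notMem.1 hx)
  calc ENNReal.ofReal ((n : ℝ) ^ (2 - (N : ℝ)) / D * (μ (ball (0 : Euc N) n)).toReal *
          (1 + ‖x‖) ^ (-(N : ℝ) + 2))
      = ENNReal.ofReal (((n : ℝ) * (1 + ‖x‖)) ^ (2 - (N : ℝ)) / D) *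
          μ (ball (0 : Euc N) n) := by
        rw [Real.mul_rpow (by linarith) hx1.le, neg_add_eq_sub,
          show (n : ℝ) ^ (2 - (N : ℝ)) / D * (μ (ball (0 : Euc N) n)).toReal *
            (1 + ‖x‖) ^ (2 - (N : ℝ)) = (n : ℝ) ^ (2 - (N : ℝ)) * (1 + ‖x‖) ^ (2 - (N : ℝ)) / D *
            (μ (ball (0 : Euc N) n)).toReal by ring,
          ENNReal.ofReal_mul (by positivity), ENNReal.ofReal_toReal hfin]
    _ = ∫⁻ _ in ball (0 : Euc N) n,
          ENNReal.ofReal (((n : ℝ) * (1 + ‖x‖)) ^ (2 - (N : ℝ)) / D) ∂μ := by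
        rw [setLIntegral_const]
    _ ≤ ∫⁻ y in ball (0 : Euc N) n, ENNReal.ofReal (fundSol N (x - y)) ∂μ := by
        refine lintegral_mono_ae ?_
        filter_upwards [hne, ae_restrict_mem measurableSet_ball] with y hy hyn
        refine ENNReal.ofReal_le_ofReal ?_
        unfold fundSol
        rw [← hD]
        refine div_le_div_of_nonneg_right ?_ hDpos.le
        refine Real.rpow_le_rpow_of_nonpos (norm_pos_iff.2 (sub_ne_zero.2 hy.symm)) ?_
          (by linarith)
        have hyn' : ‖y‖ < n := by simpa using hyn
        have := norm_sub_le x y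
        nlinarith [norm_nonneg x]
    _ ≤ GammaConvMeas N μ x := setLIntegral_le_lintegral _ _

/-- **Lemma 3.1**: under the standing assumptions (H), if `(P_κ)` has a supersolution `v`,
then it has a minimal solution `u^κ`, obtained as the limit of the approximate solutions
`U^κ_j`, with `u^κ ≤ v` a.e.; moreover `u^κ(x) ≥ C κ (1+|x|)^{-N+2}` a.e. with `C`
independent of `κ`. -/
theorem supersolution_implies_minimal_solution
    (N : ℕ) (hN : 3 ≤ N)
    (α : Euc N → ℝ) (a b : ℝ)
    (hα_cont : ContinuousOn α {(0 : Euc N)}ᶜ)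
    (hα_pos : ∀ x : Euc N, x ≠ 0 → 0 < α x)
    (ha : -2 < a)
    (hα0 : ∃ C : ℝ, ∀ᶠ x : Euc N in nhdsWithin 0 {(0 : Euc N)}ᶜ, ‖x‖ ^ (-a) * α x ≤ C)
    (hαinf : ∃ C : ℝ, ∀ᶠ x : Euc N in comap (fun x : Euc N => ‖x‖) atTop, ‖x‖ ^ (-b) * α x ≤ C)
    (p : ℝ) (r : ℝ≥0∞) (c d : ℝ)
    (hp1 : 1 < p) (hpr : ENNReal.ofReal p < r)
    (hpb : ((N : ℝ) + b) / ((N : ℝ) - 2) < p)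
    (hrN : ENNReal.ofReal ((N : ℝ) * (p - 1) / 2) < r)
    (hc : -(a + 2) / (p - 1) < c)
    (hd : d < -(b + 2) / (p - 1))
    (μ : Measure (Euc N)) [IsLocallyFiniteMeasure μ] (hμ : μ ≠ 0)
    (hΓμ : MemW N r c d (fun x => (GammaConvMeas N μ x).toReal)) :
    ∃ C : ℝ, 0 < C ∧ ∀ κ : ℝ, 0 < κ → ∀ v : Euc N → ℝ, IsSuperSolution N α p μ κ v →
      ∃ u : Euc N → ℝ, IsMinSolution N α p μ κ u ∧
        (∀ᵐ x, Tendsto (fun j => approxU N α p μ κ j x) atTop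
          (nhds (ENNReal.ofReal (u x)))) ∧
        (∀ᵐ x, u x ≤ v x) ∧
        (∀ᵐ x, C * κ * (1 + ‖x‖) ^ (-(N : ℝ) + 2) ≤ u x) := by
  have hp0 : 0 < p := by linarith
  have hα := measurable_weight hα_cont
  obtain ⟨C, hC, hlow⟩ := exists_lower_bound hN μ hμ
  refine ⟨C, hC, fun κ hκ v hv => ?_⟩
  set U : Euc N → ℝ≥0∞ := fun x => ⨆ j, approxU N α p μ κ j x with hU
  have hUv : ∀ᵐ x, U x ≤ ENNReal.ofReal (v x) := iSup_approxU_le_of_super hp0.le hv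
  have hofReal : ∀ᵐ x, ENNReal.ofReal (U x).toReal = U x := by
    filter_upwards [hUv] with x hx
    exact ENNReal.ofReal_toReal (ne_top_of_le_ne_top ENNReal.ofReal_ne_top hx)
  have hbound : ∀ᵐ x, C * κ * (1 + ‖x‖) ^ (-(N : ℝ) + 2) ≤ (U x).toReal := by
    filter_upwards [hUv, hlow] with x hx hxl
    refine (ENNReal.ofReal_le_iff_le_toReal
      (ne_top_of_le_ne_top ENNReal.ofReal_ne_top hx)).1 ?_
    calc ENNReal.ofReal (C * κ * (1 + ‖x‖) ^ (-(N : ℝ) + 2))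
        = ENNReal.ofReal κ * ENNReal.ofReal (C * (1 + ‖x‖) ^ (-(N : ℝ) + 2)) := by
          rw [← ENNReal.ofReal_mul hκ.le]
          congr 1
          ring
      _ ≤ ENNReal.ofReal κ * GammaConvMeas N μ x := mul_le_mul_right hxl _
      _ ≤ U x := le_iSup (fun j => approxU N α p μ κ j x) 0
  have hpos : ∀ᵐ x, 0 < (U x).toReal := by
    filter_upwards [hbound] with x hx
    have hx1 : 0 < 1 + ‖x‖ := by positivity
    exact lt_of_lt_of_le (mul_pos (mul_pos hC hκ) (Real.rpow_pos_of_pos hx1 _)) hx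
  have hle : ∀ w, IsSuperSolution N α p μ κ w → ∀ᵐ x, (U x).toReal ≤ w x := by
    intro w hw
    filter_upwards [iSup_approxU_le_of_super hp0.le hw, hw.2.1] with x hx hwx
    exact ENNReal.toReal_le_of_le_ofReal hwx.le hx
  refine ⟨fun x => (U x).toReal, ⟨⟨?_, hpos, ?_⟩, fun w hw => hle w hw.isSuperSolution⟩, ?_,
    hle v hv, hbound⟩
  · exact (Measurable.iSup fun j => measurable_approxU hα p μ κ j).ennreal_toReal
  · filter_upwards [hofReal] with x hx
    rw [hx, GammaConvFn_eq hpos]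
    refine (iSup_approxU_eq hα hp0 μ κ x).trans ?_
    congr 1
    refine lintegral_congr_ae ?_
    filter_upwards [hofReal] with y hy
    rw [hy]
  · filter_upwards [hofReal] with x hx
    rw [hx]
    exact tendsto_atTop_iSup fun i j hij => approxU_mono N α hp0.le μ κ hij x
end
end
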